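/- arXiv:math/0405124 — 3 statements merged into one kernel-verified Lean document; each statement's English description precedes it below -/
import Mathlib

section
/- Let D be an integral domain and ⋆ a (semi)star operation on D (i.e., a semistar operation with D^⋆ = D). Then D is a ⋆-almost Dedekind domain if and only if D is a t-almost Dedekind domain and ⋆_f = t (i.e., E^{⋆_f} = E^t for every nonzero D-submodule E of K). -/
open scoped Pointwise

section SemistarDefs

variable {D : Type*} [CommRing D] [IsDomain D]
variable {K : Type*} [Field K] [Algebra D K] [IsFractionRing D K]

/-- `star` is a semistar operation on the integral domain `D` with quotient field `K`:
a map on (nonzero) `D`-submodules of `K` satisfying `(xE)^⋆ = x·E^⋆`, monotonicity,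
extensivity and idempotence. -/
structure IsSemistarOperation (star : Submodule D K → Submodule D K) : Prop where
  ne_bot : ∀ {E : Submodule D K}, E ≠ ⊥ → star E ≠ ⊥
  map_smul : ∀ (x : K), x ≠ 0 → ∀ {E : Submodule D K}, E ≠ ⊥ →
    star (Submodule.map (LinearMap.mulLeft D x) E) = Submodule.map (LinearMap.mulLeft D x) (star E)
  mono : ∀ {E F : Submodule D K}, E ≠ ⊥ → F ≠ ⊥ → E ≤ F → star E ≤ star F
  le_star : ∀ {E : Submodule D K}, E ≠ ⊥ → E ≤ star E
  star_star : ∀ {E : Submodule D K}, E ≠ ⊥ → star (star E) = star E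

/-- The image in `K` of an ideal `I` of `D`, as a `D`-submodule of `K`. -/
def idealExt (K : Type*) [Field K] [Algebra D K] (I : Ideal D) : Submodule D K :=
  Submodule.map (Algebra.linearMap D K) I

/-- `I` is a quasi-⋆-ideal: a nonzero ideal of `D` with `I = I^⋆ ∩ D`. -/
def QuasiStarIdeal (star : Submodule D K → Submodule D K) (I : Ideal D) : Prop :=
  I ≠ ⊥ ∧ Submodule.comap (Algebra.linearMap D K) (star (idealExt K I)) = I

/-- `P` is a quasi-⋆-prime: a prime ideal which is a quasi-⋆-ideal. -/
def QuasiStarPrime (star : Submodule D K → Submodule D K) (P : Ideal D) : Prop :=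
  P.IsPrime ∧ QuasiStarIdeal star P

/-- `M` is a quasi-⋆-maximal ideal: maximal in the set of proper quasi-⋆-ideals of `D`. -/
def QuasiStarMaximal (star : Submodule D K → Submodule D K) (M : Ideal D) : Prop :=
  QuasiStarIdeal star M ∧ M ≠ ⊤ ∧
    ∀ J : Ideal D, QuasiStarIdeal star J → J ≠ ⊤ → M ≤ J → J = M

/-- The finite-type semistar operation `⋆_f` associated to `⋆`:
`E^{⋆_f} = ⋃ { F^⋆ : F nonzero finitely generated, F ⊆ E }`. -/
def finTypeOp (star : Submodule D K → Submodule D K) : Submodule D K → Submodule D K :=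
  fun E => ⨆ (F : Submodule D K) (_ : F ≠ ⊥) (_ : F.FG) (_ : F ≤ E), star F

/-- The extension `E·D_Q` of a `D`-submodule `E` of `K` to the localization of `D` at
(the complement of) `Q`, described as `{ x ∈ K : s·x ∈ E for some s ∉ Q }`. -/
def extendToPrime (Q : Ideal D) (E : Submodule D K) : Submodule D K :=
  Submodule.span D {x : K | ∃ s : D, s ∉ Q ∧ algebraMap D K s * x ∈ E}

/-- The stable semistar operation of finite type `⋆̃` associated to `⋆`:
`E^⋆̃ = ⋂ { E·D_Q : Q a quasi-⋆_f-maximal ideal of D }`. -/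
def stableOp (star : Submodule D K → Submodule D K) : Submodule D K → Submodule D K :=
  fun E => ⨅ (Q : Ideal D) (_ : QuasiStarMaximal (finTypeOp star) Q), extendToPrime Q E

/-- A rank-one discrete valuation ring: a (domain which is a) local PID which is not a field. -/
def IsDVR (R : Type*) [CommRing R] : Prop :=
  ∃ h : IsDomain R, @IsDiscreteValuationRing R _ h

/-- A valuation domain. -/
def IsValuationDomain (R : Type*) [CommRing R] : Prop :=
  ∃ h : IsDomain R, @ValuationRing R _ h

/-- `D` is a ⋆-almost Dedekind domain: `D_M` is a rank-one discrete valuation ring for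
every quasi-⋆_f-maximal ideal `M` of `D`. -/
def StarADD (star : Submodule D K → Submodule D K) : Prop :=
  ∀ (M : Ideal D) [M.IsPrime], QuasiStarMaximal (finTypeOp star) M →
    IsDVR (Localization.AtPrime M)

/-- `D` is a Prüfer ⋆-multiplication domain: `D_M` is a valuation domain for every
quasi-⋆_f-maximal ideal `M` of `D`. -/
def StarPMD (star : Submodule D K → Submodule D K) : Prop :=
  ∀ (M : Ideal D) [M.IsPrime], QuasiStarMaximal (finTypeOp star) M →
    IsValuationDomain (Localization.AtPrime M)

/-- `D` is ⋆-Noetherian: ascending chain condition on quasi-⋆-ideals. -/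
def StarNoetherian (star : Submodule D K → Submodule D K) : Prop :=
  ∀ c : ℕ →o Ideal D, (∀ n, QuasiStarIdeal star (c n)) → ∃ n, ∀ m, n ≤ m → c m = c n

/-- `D` is a ⋆-Dedekind domain: ⋆-Noetherian and a P⋆MD. -/
def StarDedekind (star : Submodule D K → Submodule D K) : Prop :=
  StarNoetherian star ∧ StarPMD star

/-- `D` has the ⋆_f-finite character property: every nonzero element of `D` lies in only
finitely many quasi-⋆_f-maximal ideals. -/
def StarFiniteCharacter (star : Submodule D K → Submodule D K) : Prop :=
  ∀ d : D, d ≠ 0 → {M : Ideal D | QuasiStarMaximal (finTypeOp star) M ∧ d ∈ M}.Finite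

/-- The `v`-operation `E ↦ (D : (D : E))`. -/
def vOp : Submodule D K → Submodule D K := fun E => 1 / (1 / E)

/-- A nonzero `D`-submodule `E` of `K` is quasi-∗-invertible if `(E·(D^∗ : E))^∗ = D^∗`. -/
def QuasiStarInvertible (star : Submodule D K → Submodule D K) (E : Submodule D K) : Prop :=
  star (E * (star 1 / E)) = star (1 : Submodule D K)

/-- `D` has the ∗-cancellation law: for nonzero fractional ideals `A`, `B`, `C`,
`(AB)^∗ = (AC)^∗` implies `B^∗ = C^∗`. -/
def StarCancellation (star : Submodule D K → Submodule D K) : Prop :=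
  ∀ A B C : Submodule D K, A ≠ ⊥ → B ≠ ⊥ → C ≠ ⊥ →
    IsFractional (nonZeroDivisors D) A → IsFractional (nonZeroDivisors D) B →
    IsFractional (nonZeroDivisors D) C →
    star (A * B) = star (A * C) → star B = star C

/-- The ∗-dimension of `D`: the supremum of the lengths of chains of quasi-∗-prime ideals
of `D` (between `(0)` and a quasi-∗-prime). -/
noncomputable def starDim (star : Submodule D K → Submodule D K) : ℕ∞ :=
  ⨆ (k : ℕ) (_ : ∃ c : Fin k → Ideal D, StrictMono c ∧ ∀ i, QuasiStarPrime star (c i)),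
    (k : ℕ∞)

/-- A submodule `T` of `K` (containing the image of an integral domain with quotient
field `K`) is integrally closed (in `K`) if every `x ∈ K` satisfying a monic polynomial
equation with coefficients in `T` belongs to `T`. -/
def IntegrallyClosedSub (T : Submodule D K) : Prop :=
  ∀ x : K, (∃ (n : ℕ) (c : Fin n → K), (∀ i, c i ∈ T) ∧
    x ^ n = ∑ i : Fin n, c i * x ^ (i : ℕ)) → x ∈ T

/-- The content ideal `c(p)` of a polynomial: the ideal generated by its coefficients. -/
def contentIdeal (p : Polynomial D) : Ideal D := Ideal.span (Set.range p.coeff)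

/-- The multiplicative set `N(⋆) = { h ∈ D[X] : h ≠ 0, c(h)^⋆ = D^⋆ }` (as a submonoid,
via the closure of this multiplicatively closed set). -/
noncomputable def nagataMonoid (star : Submodule D K → Submodule D K) : Submonoid (Polynomial D) :=
  Submonoid.closure
    {p : Polynomial D | p ≠ 0 ∧ star (idealExt K (contentIdeal p)) = star (1 : Submodule D K)}

/-- The Nagata ring `Na(D,⋆) = D[X]_{N(⋆)}`. -/
abbrev NagataRing (star : Submodule D K → Submodule D K) :=
  Localization (nagataMonoid star)

/-- `V` is a valuation overring of `D` (inside the quotient field `K`): `D ⊆ V ⊆ K` and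
for every nonzero `x ∈ K`, `x ∈ V` or `x⁻¹ ∈ V`. -/
def IsValuationOverring (D : Type*) [CommRing D] {K : Type*} [Field K] [Algebra D K]
    (V : Subring K) : Prop :=
  (∀ d : D, algebraMap D K d ∈ V) ∧ ∀ x : K, x ≠ 0 → (x ∈ V ∨ x⁻¹ ∈ V)

/-- `V` is a ∗-valuation overring of `D`: a valuation overring such that `F^∗ ⊆ FV` for
every nonzero finitely generated `D`-submodule `F` of `K`. -/
def IsStarValuationOverring (star : Submodule D K → Submodule D K) (V : Subring K) : Prop :=
  IsValuationOverring D V ∧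
    ∀ F : Submodule D K, F ≠ ⊥ → F.FG →
      star F ≤ Submodule.span D ((F : Set K) * (V : Set K))

/-- `D` is a Krull domain: there is a family of rank-one discrete valuation overrings of `D`
with quotient field `K` whose intersection is `D`, with finite character. -/
def IsKrullDomain (D : Type*) [CommRing D] (K : Type*) [Field K] [Algebra D K] : Prop :=
  ∃ 𝒱 : Set (Subring K),
    (∀ V ∈ 𝒱, (∀ d : D, algebraMap D K d ∈ V) ∧ IsDVR V ∧
      ∀ x : K, ∃ a ∈ V, ∃ b ∈ V, b ≠ 0 ∧ x * b = a) ∧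
    (⋂ V ∈ 𝒱, (V : Set K)) = Set.range (algebraMap D K) ∧
    ∀ d : D, d ≠ 0 → {V ∈ 𝒱 | ¬ ∃ y ∈ V, algebraMap D K d * y = 1}.Finite

end SemistarDefs

section Statement

variable {D : Type*} [CommRing D] [IsDomain D]
variable {K : Type*} [Field K] [Algebra D K] [IsFractionRing D K]


theorem aux_mem_finType (star : Submodule D K → Submodule D K) (hstar : IsSemistarOperation star)
    {E : Submodule D K} (hE : E ≠ ⊥) (x : K) :
    x ∈ finTypeOp star E ↔ ∃ F : Submodule D K, F ≠ ⊥ ∧ F.FG ∧ F ≤ E ∧ x ∈ star F := by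
  constructor
  · intro hx
    let S : Submodule D K :=
      { carrier := {x | ∃ F : Submodule D K, F ≠ ⊥ ∧ F.FG ∧ F ≤ E ∧ x ∈ star F}
        zero_mem' := by
          obtain ⟨e, he, he0⟩ := Submodule.exists_mem_ne_zero_of_ne_bot hE
          refine ⟨Submodule.span D {e}, ?_, Submodule.fg_span_singleton e, ?_, Submodule.zero_mem _⟩
          · simpa using he0
          · simpa using he
        add_mem' := by
          rintro a b ⟨F, h1, h2, h3, h4⟩ ⟨G, g1, g2, g3, g4⟩
          have hne : F ⊔ G ≠ ⊥ := by
            intro h; exact h1 (sup_eq_bot_iff.mp h).1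
          exact ⟨F ⊔ G, hne, h2.sup g2, sup_le h3 g3,
            Submodule.add_mem _ (hstar.mono h1 hne le_sup_left h4)
              (hstar.mono g1 hne le_sup_right g4)⟩
        smul_mem' := by
          rintro c a ⟨F, h1, h2, h3, h4⟩
          exact ⟨F, h1, h2, h3, Submodule.smul_mem _ _ h4⟩ }
    have : finTypeOp star E ≤ S := by
      refine iSup_le fun F => iSup_le fun h1 => iSup_le fun h2 => iSup_le fun h3 => ?_
      intro y hy
      exact ⟨F, h1, h2, h3, hy⟩
    exact this hx
  · rintro ⟨F, h1, h2, h3, h4⟩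
    exact (le_iSup_of_le F (le_iSup_of_le h1 (le_iSup_of_le h2 (le_iSup_of_le h3 le_rfl))) :
      star F ≤ finTypeOp star E) h4


theorem aux_fg_le (star : Submodule D K → Submodule D K) (hstar : IsSemistarOperation star)
    {E : Submodule D K} (hE : E ≠ ⊥) {F : Submodule D K} (hF : F.FG)
    (hFE : F ≤ finTypeOp star E) :
    ∃ G : Submodule D K, G ≠ ⊥ ∧ G.FG ∧ G ≤ E ∧ F ≤ star G := by
  induction F, hF using Submodule.fg_induction with
  | singleton x =>
    obtain ⟨G, h1, h2, h3, h4⟩ := (aux_mem_finType star hstar hE x).1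
      (hFE (Submodule.mem_span_singleton_self x))
    exact ⟨G, h1, h2, h3, by simpa using h4⟩
  | sup A B _ _ hA hB =>
    obtain ⟨F, h1, h2, h3, h4⟩ := hA (le_sup_left.trans hFE)
    obtain ⟨G, g1, g2, g3, g4⟩ := hB (le_sup_right.trans hFE)
    have hne : F ⊔ G ≠ ⊥ := by
      intro h; exact h1 (sup_eq_bot_iff.mp h).1
    exact ⟨F ⊔ G, hne, h2.sup g2, sup_le h3 g3,
      sup_le (h4.trans (hstar.mono h1 hne le_sup_left))
        (g4.trans (hstar.mono g1 hne le_sup_right))⟩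

theorem aux_idealExt_ne_bot {I : Ideal D} (hI : I ≠ ⊥) : idealExt K I ≠ ⊥ := by
  obtain ⟨e, he, he0⟩ := Submodule.exists_mem_ne_zero_of_ne_bot hI
  intro h
  have h1 : algebraMap D K e ∈ idealExt K I := ⟨e, he, rfl⟩
  rw [h, Submodule.mem_bot] at h1
  exact he0 ((IsFractionRing.injective D K) (by simpa using h1))

theorem aux_map_ne_bot {x : K} (hx : x ≠ 0) {F : Submodule D K} (hF : F ≠ ⊥) :
    Submodule.map (LinearMap.mulLeft D x) F ≠ ⊥ := by
  obtain ⟨e, he, he0⟩ := Submodule.exists_mem_ne_zero_of_ne_bot hF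
  intro h
  have h1 : x * e ∈ Submodule.map (LinearMap.mulLeft D x) F := ⟨e, he, rfl⟩
  rw [h, Submodule.mem_bot] at h1
  exact mul_ne_zero hx he0 h1

/-- Every ideal not blowing up lies in a prime quasi-maximal ideal. -/
theorem aux_exists_max (star : Submodule D K → Submodule D K) (hstar : IsSemistarOperation star)
    {I : Ideal D} (hI : I ≠ ⊥) (h1 : (1 : K) ∉ finTypeOp star (idealExt K I)) :
    ∃ M : Ideal D, M.IsPrime ∧ QuasiStarMaximal (finTypeOp star) M ∧ I ≤ M := by
  obtain ⟨M, hIM, hM⟩ := zorn_le_nonempty₀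
    {J : Ideal D | J ≠ ⊥ ∧ (1 : K) ∉ finTypeOp star (idealExt K J)} (by
      intro c hc hchain J hJ
      have hne : sSup c ≠ ⊥ := fun h => (hc hJ).1 (le_bot_iff.1 (h ▸ le_sSup hJ))
      refine ⟨sSup c, ⟨hne, ?_⟩, fun z hz => le_sSup hz⟩
      intro hmem
      obtain ⟨F, f1, f2, f3, f4⟩ :=
        (aux_mem_finType star hstar (aux_idealExt_ne_bot hne) _).1 hmem
      have hF : ∃ J ∈ c, F ≤ idealExt K J := by
        clear f1 f4 hmem
        induction F, f2 using Submodule.fg_induction with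
        | singleton x =>
          obtain ⟨y, hy, hyx⟩ := f3 (Submodule.mem_span_singleton_self x)
          obtain ⟨J', hJ', hy'⟩ := (Submodule.mem_sSup_of_directed ⟨J, hJ⟩ hchain.directedOn).1 hy
          refine ⟨J', hJ', ?_⟩
          rw [Submodule.span_singleton_le_iff_mem]
          exact ⟨y, hy', hyx⟩
        | sup A B _ _ hA hB =>
          obtain ⟨J1, j1, k1⟩ := hA (le_sup_left.trans f3)
          obtain ⟨J2, j2, k2⟩ := hB (le_sup_right.trans f3)
          obtain ⟨J3, j3, l1, l2⟩ := hchain.directedOn J1 j1 J2 j2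
          exact ⟨J3, j3, sup_le (k1.trans (Submodule.map_mono l1))
            (k2.trans (Submodule.map_mono l2))⟩
      obtain ⟨J', hJ', hFJ⟩ := hF
      exact (hc hJ').2 ((aux_mem_finType star hstar (aux_idealExt_ne_bot (hc hJ').1) _).2
        ⟨F, f1, f2, hFJ, f4⟩)) I ⟨hI, h1⟩
  obtain ⟨⟨hM0, hM1⟩, hMmax⟩ := hM
  have hEM := aux_idealExt_ne_bot (K := K) hM0
  have hle : M ≤ Submodule.comap (Algebra.linearMap D K) (finTypeOp star (idealExt K M)) := by
    intro m hm
    by_cases hm0 : m = 0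
    · subst hm0; exact Submodule.zero_mem _
    have hne : Submodule.span D {algebraMap D K m} ≠ ⊥ := by
      simpa using hm0
    refine (aux_mem_finType star hstar hEM _).2
      ⟨_, hne, Submodule.fg_span_singleton _, ?_,
        hstar.le_star hne (Submodule.mem_span_singleton_self _)⟩
    rw [Submodule.span_singleton_le_iff_mem]
    exact ⟨m, hm, rfl⟩
  have hqs : Submodule.comap (Algebra.linearMap D K) (finTypeOp star (idealExt K M)) = M := by
    refine le_antisymm (hMmax ⟨fun h => hM0 (le_bot_iff.1 (h ▸ hle)), ?_⟩ hle) hle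
    intro hmem
    have hJ0 : Submodule.comap (Algebra.linearMap D K) (finTypeOp star (idealExt K M)) ≠ ⊥ :=
      fun h => hM0 (le_bot_iff.1 (h ▸ hle))
    obtain ⟨F, f1, f2, f3, f4⟩ :=
      (aux_mem_finType star hstar (aux_idealExt_ne_bot hJ0) _).1 hmem
    have hF : F ≤ finTypeOp star (idealExt K M) := f3.trans (Submodule.map_comap_le _ _)
    obtain ⟨G, g1, g2, g3, g4⟩ := aux_fg_le star hstar hEM f2 hF
    refine hM1 ((aux_mem_finType star hstar hEM _).2 ⟨G, g1, g2, g3, ?_⟩)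
    rw [← hstar.star_star g1]
    exact hstar.mono f1 (hstar.ne_bot g1) g4 f4
  have hMtop : M ≠ ⊤ := by
    intro h
    apply hM1
    have : (1 : D) ∈ Submodule.comap (Algebra.linearMap D K) (finTypeOp star (idealExt K M)) :=
      hle (h ▸ Submodule.mem_top)
    simpa using this
  refine ⟨M, ⟨hMtop, ?_⟩, ⟨⟨hM0, hqs⟩, hMtop, ?_⟩, hIM⟩
  · intro a b hab
    by_contra! hcon
    obtain ⟨ha, hb⟩ := hcon
    have hb0 : algebraMap D K b ≠ 0 := by
      intro h
      apply hb
      have : b = 0 := IsFractionRing.injective D K (by simpa using h)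
      rw [this]; exact Submodule.zero_mem _
    have hN0 : M ⊔ Ideal.span {a} ≠ ⊥ := fun h => hM0 (sup_eq_bot_iff.mp h).1
    have hN : (1 : K) ∈ finTypeOp star (idealExt K (M ⊔ Ideal.span {a})) := by
      by_contra hcon
      exact ha (hMmax (y := M ⊔ Ideal.span {a}) ⟨hN0, hcon⟩ le_sup_left
        (Ideal.mem_sup_right (Ideal.mem_span_singleton_self a)))
    obtain ⟨F, f1, f2, f3, f4⟩ :=
      (aux_mem_finType star hstar (aux_idealExt_ne_bot hN0) _).1 hN
    apply hb
    rw [← hqs]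
    refine (aux_mem_finType star hstar hEM _).2
      ⟨Submodule.map (LinearMap.mulLeft D (algebraMap D K b)) F, aux_map_ne_bot hb0 f1,
        f2.map _, ?_, ?_⟩
    · rintro _ ⟨y, hy, rfl⟩
      obtain ⟨z, hz, rfl⟩ := f3 hy
      refine ⟨b * z, ?_, by simp⟩
      obtain ⟨m, hm, w, hw, rfl⟩ := Submodule.mem_sup.1 hz
      obtain ⟨r, rfl⟩ := Ideal.mem_span_singleton'.1 hw
      have : b * (m + r * a) = b * m + r * (a * b) := by ring
      rw [this]
      exact Ideal.add_mem _ (Ideal.mul_mem_left _ _ hm) (Ideal.mul_mem_left _ _ hab)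
    · rw [hstar.map_smul _ hb0 f1]
      exact ⟨1, f4, by simp⟩
  · intro J hJ hJtop hMJ
    refine le_antisymm (hMmax ⟨hJ.1, ?_⟩ hMJ) hMJ
    intro hmem
    apply hJtop
    rw [Ideal.eq_top_iff_one, ← hJ.2]
    simpa using hmem

/-- Comparability in `K` relative to a prime with valuation localization. -/
theorem aux_compare (M : Ideal D) [M.IsPrime] (h : IsDVR (Localization.AtPrime M)) (x y : K) :
    ∃ s : D, s ∉ M ∧ ((∃ d : D, algebraMap D K s * x = algebraMap D K d * y) ∨
      (∃ d : D, algebraMap D K s * y = algebraMap D K d * x)) := by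
  have key : ∀ u v : D, algebraMap D (Localization.AtPrime M) u ∣ algebraMap D _ v →
      ∃ s : D, s ∉ M ∧ ∃ d : D, s * v = d * u := by
    rintro u v ⟨w, hw⟩
    obtain ⟨⟨d, s⟩, hds⟩ := IsLocalization.surj M.primeCompl w
    refine ⟨s, s.2, d, ?_⟩
    apply IsLocalization.injective (Localization.AtPrime M) M.primeCompl_le_nonZeroDivisors
    simp only [map_mul] at hds ⊢
    rw [hw, ← hds]; ring
  obtain ⟨p, q, hq, rfl⟩ := IsFractionRing.div_surjective (A := D) x
  obtain ⟨p', q', hq', rfl⟩ := IsFractionRing.div_surjective (A := D) y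
  have hq0 : algebraMap D K q ≠ 0 := IsFractionRing.to_map_ne_zero_of_mem_nonZeroDivisors hq
  have hq0' : algebraMap D K q' ≠ 0 := IsFractionRing.to_map_ne_zero_of_mem_nonZeroDivisors hq'
  obtain ⟨hd, hdvr⟩ := h
  rcases ValuationRing.dvd_total (algebraMap D (Localization.AtPrime M) (p * q'))
    (algebraMap D (Localization.AtPrime M) (p' * q)) with h | h
  · obtain ⟨s, hs, d, hsd⟩ := key _ _ h
    refine ⟨s, hs, Or.inr ⟨d, ?_⟩⟩
    have := congrArg (algebraMap D K) hsd
    simp only [map_mul] at this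
    field_simp
    linear_combination this
  · obtain ⟨s, hs, d, hsd⟩ := key _ _ h
    refine ⟨s, hs, Or.inl ⟨d, ?_⟩⟩
    have := congrArg (algebraMap D K) hsd
    simp only [map_mul] at this
    field_simp
    linear_combination this

theorem aux_gen (M : Ideal D) [hM : M.IsPrime] (h : IsDVR (Localization.AtPrime M))
    {F : Submodule D K} (hF : F.FG) :
    ∃ a ∈ F, ∃ s : D, s ∉ M ∧ ∀ y ∈ F, ∃ d : D, algebraMap D K s * y = algebraMap D K d * a := by
  induction F, hF using Submodule.fg_induction with
  | singleton x =>
    refine ⟨x, Submodule.mem_span_singleton_self x, 1, hM.one_notMem, ?_⟩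
    intro y hy
    obtain ⟨d, rfl⟩ := Submodule.mem_span_singleton.1 hy
    exact ⟨d, by simp [Algebra.smul_def]⟩
  | sup A B _ _ hA hB =>
    obtain ⟨a, ha, s, hs, hsa⟩ := hA
    obtain ⟨b, hb, t, ht, htb⟩ := hB
    obtain ⟨u, hu, hab⟩ := aux_compare M h a b
    have hn : u * (s * t) ∉ M := by
      intro hm
      rcases hM.mem_or_mem hm with hm | hm
      · exact hu hm
      · rcases hM.mem_or_mem hm with hm | hm
        · exact hs hm
        · exact ht hm
    rcases hab with ⟨c, hc⟩ | ⟨c, hc⟩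
    · refine ⟨b, Submodule.mem_sup_right hb, _, hn, ?_⟩
      intro y hy
      obtain ⟨y1, hy1, y2, hy2, rfl⟩ := Submodule.mem_sup.1 hy
      obtain ⟨d1, e1⟩ := hsa y1 hy1
      obtain ⟨d2, e2⟩ := htb y2 hy2
      refine ⟨t * d1 * c + u * s * d2, ?_⟩
      simp only [map_mul, map_add]
      linear_combination (algebraMap D K u * algebraMap D K t) * e1 +
        (algebraMap D K u * algebraMap D K s) * e2 + (algebraMap D K t * algebraMap D K d1) * hc
    · refine ⟨a, Submodule.mem_sup_left ha, _, hn, ?_⟩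
      intro y hy
      obtain ⟨y1, hy1, y2, hy2, rfl⟩ := Submodule.mem_sup.1 hy
      obtain ⟨d1, e1⟩ := hsa y1 hy1
      obtain ⟨d2, e2⟩ := htb y2 hy2
      refine ⟨s * d2 * c + u * t * d1, ?_⟩
      simp only [map_mul, map_add]
      linear_combination (algebraMap D K u * algebraMap D K t) * e1 +
        (algebraMap D K u * algebraMap D K s) * e2 + (algebraMap D K s * algebraMap D K d2) * hc

theorem aux_star_eq_v (star : Submodule D K → Submodule D K) (hstar : IsSemistarOperation star)
    (hsemi : star (1 : Submodule D K) = 1) (hADD : StarADD star)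
    {F : Submodule D K} (hF : F ≠ ⊥) (hfg : F.FG) : star F = vOp F := by
  have h1ne : (1 : Submodule D K) ≠ ⊥ := one_ne_zero
  apply le_antisymm
  · intro x hx
    refine Submodule.mem_div_iff_forall_mul_mem.2 ?_
    intro z hz
    rw [Submodule.mem_div_iff_forall_mul_mem] at hz
    by_cases hz0 : z = 0
    · subst hz0; simp
    have hle : Submodule.map (LinearMap.mulLeft D z) F ≤ 1 := by
      rintro _ ⟨y, hy, rfl⟩
      exact hz y hy
    have := hstar.mono (aux_map_ne_bot hz0 hF) h1ne hle
    rw [hsemi, hstar.map_smul z hz0 hF] at this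
    rw [mul_comm]
    exact this ⟨x, hx, rfl⟩
  · intro x hx
    by_cases hx0 : x = 0
    · subst hx0; exact Submodule.zero_mem _
    let I : Ideal D := Submodule.comap (LinearMap.toSpanSingleton D K x) F
    have hI : ∀ d : D, d ∈ I ↔ algebraMap D K d * x ∈ F := by
      intro d
      simp [I, Algebra.smul_def]
    have hv : ∀ a ∈ F, ∀ s : D, s ≠ 0 →
        (∀ y ∈ F, ∃ d : D, algebraMap D K s * y = algebraMap D K d * a) → s ∈ I := by
      intro a ha s hs hsa
      rw [hI]
      have ha0 : a ≠ 0 := by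
        rintro rfl
        apply hF
        rw [eq_bot_iff]
        intro y hy
        obtain ⟨d, hd⟩ := hsa y hy
        have hs' : algebraMap D K s ≠ 0 := by simpa using hs
        simpa [hs'] using hd
      have hmem : algebraMap D K s / a ∈ (1 / F : Submodule D K) := by
        rw [Submodule.mem_div_iff_forall_mul_mem]
        intro y hy
        obtain ⟨d, hd⟩ := hsa y hy
        rw [Submodule.mem_one]
        refine ⟨d, ?_⟩
        field_simp
        linear_combination -hd
      have h2 := Submodule.mem_div_iff_forall_mul_mem.1 hx _ hmem
      obtain ⟨e, he⟩ := Submodule.mem_one.1 h2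
      have : algebraMap D K s * x = e • a := by
        rw [Algebra.smul_def, he]; field_simp
      rw [this]
      exact Submodule.smul_mem _ _ ha
    have hI0 : I ≠ ⊥ := by
      obtain ⟨f, hf, hf0⟩ := Submodule.exists_mem_ne_zero_of_ne_bot hF
      obtain ⟨p, q, hq, hpq⟩ := IsFractionRing.div_surjective (A := D) (x / f)
      have hq0 : algebraMap D K q ≠ 0 := IsFractionRing.to_map_ne_zero_of_mem_nonZeroDivisors hq
      have : q ∈ I := by
        rw [hI]
        have : algebraMap D K q * x = p • f := by
          rw [Algebra.smul_def]
          field_simp at hpq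
          linear_combination -hpq
        rw [this]
        exact Submodule.smul_mem _ _ hf
      intro h
      rw [h, Submodule.mem_bot] at this
      exact hq0 (by simp [this])
    have hone : (1 : K) ∈ finTypeOp star (idealExt K I) := by
      by_contra hcon
      obtain ⟨M, hMp, hMq, hIM⟩ := aux_exists_max star hstar hI0 hcon
      obtain ⟨a, ha, s, hs, hsa⟩ := aux_gen M (hADD M hMq) hfg
      exact hs (hIM (hv a ha s (fun h => hs (h ▸ Submodule.zero_mem _)) hsa))
    obtain ⟨G, g1, g2, g3, g4⟩ :=
      (aux_mem_finType star hstar (aux_idealExt_ne_bot hI0) _).1 hone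
    have hle : Submodule.map (LinearMap.mulLeft D x) G ≤ F := by
      rintro _ ⟨y, hy, rfl⟩
      obtain ⟨d, hd, rfl⟩ := g3 hy
      have := (hI d).1 hd
      simpa [mul_comm] using this
    apply hstar.mono (aux_map_ne_bot hx0 g1) hF hle
    rw [hstar.map_smul x hx0 g1]
    exact ⟨1, g4, by simp⟩

theorem aux_transfer {s t : Submodule D K → Submodule D K}
    (h : ∀ E : Submodule D K, E ≠ ⊥ → s E = t E) (M : Ideal D)
    (hM : QuasiStarMaximal s M) : QuasiStarMaximal t M := by
  have hq : ∀ J : Ideal D, QuasiStarIdeal s J ↔ QuasiStarIdeal t J := by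
    intro J
    unfold QuasiStarIdeal
    refine and_congr_right fun hJ => ?_
    rw [h _ (aux_idealExt_ne_bot hJ)]
  exact ⟨(hq M).1 hM.1, hM.2.1, fun J hJ => hM.2.2 J ((hq J).2 hJ)⟩

/-- `D` an integral domain, `⋆` a (semi)star operation on `D`
(i.e. `D^⋆ = D`). Then `D` is a ⋆-almost Dedekind domain iff `D` is a `t`-almost Dedekind
domain and `⋆_f = t` (on every nonzero submodule). -/
theorem starADD_iff_tADD_and_finType_eq_t
    (star : Submodule D K → Submodule D K) (hstar : IsSemistarOperation star)
    (hsemi : star (1 : Submodule D K) = 1) :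
    StarADD star ↔
      (StarADD (vOp (D := D) (K := K)) ∧
        ∀ E : Submodule D K, E ≠ ⊥ → finTypeOp star E = finTypeOp (vOp (D := D) (K := K)) E) := by
  constructor
  · intro hADD
    have heq : ∀ E : Submodule D K, E ≠ ⊥ →
        finTypeOp star E = finTypeOp (vOp (D := D) (K := K)) E := by
      intro E _
      unfold finTypeOp
      refine iSup_congr fun F => iSup_congr fun h1 => iSup_congr fun h2 => iSup_congr fun _ => ?_
      exact aux_star_eq_v star hstar hsemi hADD h1 h2
    exact ⟨fun M _ hM => hADD M (aux_transfer (fun E hE => (heq E hE).symm) M hM), heq⟩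
  · rintro ⟨hADD, heq⟩
    exact fun M _ hM => hADD M (aux_transfer heq M hM)

end Statement
end

section
/- Let D be an integral domain and ⋆ a semistar operation on D such that D is a Prüfer ⋆-multiplication domain. Let P be a prime ideal of D, let Q be a nonzero P-primary ideal of D, and let x ∈ D \ P. Then Q^⋆̃ = (Q(Q + xD))^⋆̃. -/
open scoped Pointwise

section Helpers

variable {D : Type*} [CommRing D] [IsDomain D]
variable {K : Type*} [Field K] [Algebra D K] [IsFractionRing D K]

theorem aux_mem_finTypeOp {star : Submodule D K → Submodule D K} (hs : IsSemistarOperation star)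
    {E : Submodule D K} (hE : E ≠ ⊥) (y : K) :
    y ∈ finTypeOp star E ↔ ∃ F : Submodule D K, F ≠ ⊥ ∧ F.FG ∧ F ≤ E ∧ y ∈ star F := by
  constructor
  · intro hy
    obtain ⟨e, heE, he0⟩ := Submodule.exists_mem_ne_zero_of_ne_bot hE
    let T : Submodule D K :=
      { carrier := {y | ∃ F : Submodule D K, F ≠ ⊥ ∧ F.FG ∧ F ≤ E ∧ y ∈ star F}
        zero_mem' := ⟨Submodule.span D {e}, by simpa using he0, Submodule.fg_span_singleton e,
          by simpa [Submodule.span_le] using heE, Submodule.zero_mem _⟩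
        smul_mem' := by
          rintro c z ⟨F, h1, h2, h3, h4⟩
          exact ⟨F, h1, h2, h3, Submodule.smul_mem _ _ h4⟩
        add_mem' := by
          rintro z w ⟨F, h1, h2, h3, h4⟩ ⟨G, g1, g2, g3, g4⟩
          have hne : F ⊔ G ≠ ⊥ := fun h => h1 (by
            rw [eq_bot_iff]; exact le_sup_left.trans h.le)
          exact ⟨F ⊔ G, hne, h2.sup g2, sup_le h3 g3, Submodule.add_mem _
            (hs.mono h1 hne le_sup_left h4) (hs.mono g1 hne le_sup_right g4)⟩ }
    have : finTypeOp star E ≤ T := by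
      refine iSup_le fun F => iSup_le fun h1 => iSup_le fun h2 => iSup_le fun h3 => ?_
      intro z hz
      exact ⟨F, h1, h2, h3, hz⟩
    exact this hy
  · rintro ⟨F, h1, h2, h3, h4⟩
    have : star F ≤ finTypeOp star E :=
      le_iSup_of_le F (le_iSup_of_le h1 (le_iSup_of_le h2 (le_iSup_of_le h3 le_rfl)))
    exact this h4

theorem aux_le_finTypeOp {star : Submodule D K → Submodule D K} (hs : IsSemistarOperation star)
    {E : Submodule D K} (hE : E ≠ ⊥) : E ≤ finTypeOp star E := by
  intro e he
  by_cases h0 : e = 0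
  · rw [h0]; exact Submodule.zero_mem _
  · rw [aux_mem_finTypeOp hs hE]
    have hne : Submodule.span D {e} ≠ ⊥ := by simpa using h0
    exact ⟨Submodule.span D {e}, hne, Submodule.fg_span_singleton e,
      by simpa [Submodule.span_le] using he,
      hs.le_star hne (Submodule.mem_span_singleton_self e)⟩

theorem aux_idem {star : Submodule D K → Submodule D K} (hs : IsSemistarOperation star)
    {E : Submodule D K} (hE : E ≠ ⊥) {F : Submodule D K} (hF : F ≠ ⊥) (hfg : F.FG)
    (hle : F ≤ finTypeOp star E) : star F ≤ finTypeOp star E := by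
  classical
  have key : ∀ S : Finset K, (∀ z ∈ S, z ∈ finTypeOp star E) →
      ∃ G : Submodule D K, G ≠ ⊥ ∧ G.FG ∧ G ≤ E ∧ ∀ z ∈ S, z ∈ star G := by
    intro S
    induction S using Finset.induction_on with
    | empty =>
      intro _
      obtain ⟨F, h1, h2, h3, h4⟩ := (aux_mem_finTypeOp hs hE 0).1 (Submodule.zero_mem _)
      exact ⟨F, h1, h2, h3, by simp⟩
    | insert a S _ ih =>
      intro h
      obtain ⟨G, g1, g2, g3, g4⟩ := ih fun z hz => h z (Finset.mem_insert_of_mem hz)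
      obtain ⟨F, h1, h2, h3, h4⟩ := (aux_mem_finTypeOp hs hE a).1 (h a (Finset.mem_insert_self _ _))
      have hne : F ⊔ G ≠ ⊥ := fun h => h1 (by
            rw [eq_bot_iff]; exact le_sup_left.trans h.le)
      refine ⟨F ⊔ G, hne, h2.sup g2, sup_le h3 g3, ?_⟩
      intro z hz
      rcases Finset.mem_insert.1 hz with rfl | hz
      · exact hs.mono h1 hne le_sup_left h4
      · exact hs.mono g1 hne le_sup_right (g4 z hz)
  obtain ⟨S, rfl⟩ := hfg
  obtain ⟨G, g1, g2, g3, g4⟩ := key S fun z hz => hle (Submodule.subset_span hz)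
  have h1 : Submodule.span D (S : Set K) ≤ star G := Submodule.span_le.2 g4
  have h2 := hs.mono hF (hs.ne_bot g1) h1
  rw [hs.star_star g1] at h2
  intro y hy
  exact (aux_mem_finTypeOp hs hE y).2 ⟨G, g1, g2, g3, h2 hy⟩

theorem aux_mem_idealExt {I : Ideal D} {d : D} :
    algebraMap D K d ∈ idealExt K I ↔ d ∈ I := by
  constructor
  · rintro ⟨e, he, h⟩
    have := IsFractionRing.injective D K h
    exact this ▸ he
  · intro h
    exact ⟨d, h, rfl⟩

theorem aux_prime {star : Submodule D K → Submodule D K} (hs : IsSemistarOperation star)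
    {M : Ideal D} (hM : QuasiStarMaximal (finTypeOp star) M) : M.IsPrime := by
  obtain ⟨⟨hM0, hMq⟩, hMt, hmax⟩ := hM
  refine ⟨hMt, ?_⟩
  intro a b hab
  by_contra hcon
  push Not at hcon
  obtain ⟨ha, hb⟩ := hcon
  have hb0 : b ≠ 0 := fun h => hb (h ▸ M.zero_mem)
  let I : Ideal D := M ⊔ Ideal.span {a}
  have hI0 : I ≠ ⊥ := fun h => hM0 (by rw [eq_bot_iff]; exact le_sup_left.trans h.le)
  have hE := aux_idealExt_ne_bot (K := K) hI0
  let J : Ideal D := Submodule.comap (Algebra.linearMap D K) (finTypeOp star (idealExt K I))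
  have hIJ : I ≤ J := fun d hd => aux_le_finTypeOp hs hE (aux_mem_idealExt.2 hd)
  have hJ0 : J ≠ ⊥ := fun h => hI0 (by rw [eq_bot_iff]; exact hIJ.trans h.le)
  have hEJ := aux_idealExt_ne_bot (K := K) hJ0
  have hJE : idealExt K J ≤ finTypeOp star (idealExt K I) := Submodule.map_comap_le _ _
  have hJq : QuasiStarIdeal (finTypeOp star) J := by
    refine ⟨hJ0, le_antisymm ?_ ?_⟩
    · refine Submodule.comap_mono ?_
      intro y hy
      obtain ⟨F, h1, h2, h3, h4⟩ := (aux_mem_finTypeOp hs hEJ y).1 hy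
      exact aux_idem hs hE h1 h2 (h3.trans hJE) h4
    · intro d hd
      exact aux_le_finTypeOp hs hEJ (aux_mem_idealExt.2 hd)
  have hJt : J = ⊤ := by
    by_contra hne
    have := hmax J hJq hne (le_sup_left.trans hIJ)
    exact ha (this ▸ hIJ (le_sup_right (a := M) (Ideal.mem_span_singleton_self a)))
  have h1J : (1 : D) ∈ J := hJt ▸ Submodule.mem_top
  have h1 : (1 : K) ∈ finTypeOp star (idealExt K I) := by simpa [J] using h1J
  obtain ⟨F, h1, h2, h3, h4⟩ := (aux_mem_finTypeOp hs hE _).1 h1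
  have hbK : algebraMap D K b ≠ 0 := fun h =>
    hb0 ((map_eq_zero_iff _ (IsFractionRing.injective D K)).1 h)
  apply hb
  rw [← hMq]
  change algebraMap D K b ∈ finTypeOp star (idealExt K M)
  rw [aux_mem_finTypeOp hs (aux_idealExt_ne_bot hM0)]
  refine ⟨F.map (LinearMap.mulLeft D (algebraMap D K b)), ?_, h2.map _, ?_, ?_⟩
  · obtain ⟨e, he, he0⟩ := Submodule.exists_mem_ne_zero_of_ne_bot h1
    intro h
    have : algebraMap D K b * e ∈ F.map (LinearMap.mulLeft D (algebraMap D K b)) := ⟨e, he, rfl⟩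
    rw [h, Submodule.mem_bot] at this
    exact mul_ne_zero hbK he0 this
  · rintro _ ⟨y, hy, rfl⟩
    obtain ⟨d, hd, rfl⟩ := h3 hy
    change algebraMap D K b * algebraMap D K d ∈ _
    rw [← map_mul, aux_mem_idealExt]
    obtain ⟨m, hm, z, hz, rfl⟩ := Submodule.mem_sup.1 hd
    obtain ⟨c, rfl⟩ := Ideal.mem_span_singleton'.1 hz
    have : b * (m + c * a) = b * m + c * (a * b) := by ring
    rw [this]
    exact M.add_mem (M.mul_mem_left _ hm) (M.mul_mem_left _ hab)
  · rw [hs.map_smul _ hbK h1]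
    exact ⟨1, h4, by simp⟩

theorem aux_dvd {M : Ideal D} [M.IsPrime] {q x : D}
    (h : algebraMap D (Localization.AtPrime M) x ∣ algebraMap D (Localization.AtPrime M) q) :
    ∃ s d : D, s ∉ M ∧ s * q = x * d := by
  obtain ⟨c, hc⟩ := h
  obtain ⟨⟨d, s⟩, hds⟩ := IsLocalization.surj M.primeCompl c
  have : algebraMap D (Localization.AtPrime M) (q * s) =
      algebraMap D (Localization.AtPrime M) (x * d) := by
    rw [map_mul, map_mul, hc, mul_assoc, hds]
  obtain ⟨t, ht⟩ := (IsLocalization.eq_iff_exists M.primeCompl _).1 this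
  refine ⟨t * s, t * d, (t * s).2, ?_⟩
  linear_combination ht

theorem aux_key {M P Q : Ideal D} [hMp : M.IsPrime]
    (hV : IsValuationDomain (Localization.AtPrime M))
    (hQprimary : Q.IsPrimary) (hrad : Q.radical = P) (x : D) (hx : x ∉ P) (q : D) (hq : q ∈ Q) :
    ∃ s : D, s ∉ M ∧ s * q ∈ Q * (Q + Ideal.span {x}) := by
  by_cases hQM : Q ≤ M
  · have hPM : P ≤ M := hrad ▸ hMp.radical_le_iff.2 hQM
    obtain ⟨h, hv⟩ := hV
    rcases ValuationRing.dvd_total (algebraMap D (Localization.AtPrime M) x)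
      (algebraMap D (Localization.AtPrime M) q) with hd | hd
    · obtain ⟨s, d, hs, he⟩ := aux_dvd hd
      refine ⟨s, hs, ?_⟩
      have hxd : d * x ∈ Q := by rw [mul_comm, ← he]; exact Q.mul_mem_left _ hq
      have hdQ : d ∈ Q := by
        rcases (Ideal.isPrimary_iff.1 hQprimary).2 hxd with h | h
        · exact h
        · exact absurd (hrad ▸ h) hx
      rw [he, mul_comm x d]
      exact Ideal.mul_mem_mul hdQ (le_sup_right (a := Q) (Ideal.mem_span_singleton_self x))
    · obtain ⟨s, d, hs, he⟩ := aux_dvd hd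
      exfalso
      have hsx : x * s ∈ Q := by rw [mul_comm, he]; exact Q.mul_mem_right _ hq
      have hPp : P.IsPrime := hrad ▸ Ideal.isPrime_radical hQprimary
      rcases hPp.mem_or_mem (hrad ▸ Ideal.le_radical hsx : x * s ∈ P) with h | h
      · exact hx h
      · exact hs (hPM h)
  · obtain ⟨t, htQ, htM⟩ := Set.not_subset.1 hQM
    exact ⟨t, htM, Ideal.mul_mem_mul htQ (le_sup_left (b := Ideal.span {x}) hq)⟩

end Helpers

section Statement

variable {D : Type*} [CommRing D] [IsDomain D]
variable {K : Type*} [Field K] [Algebra D K] [IsFractionRing D K]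

/-- `D` an integral domain, `⋆` a semistar operation such that `D` is a
P⋆MD. If `Q` is a nonzero `P`-primary ideal and `x ∈ D \ P`, then
`Q^⋆̃ = (Q(Q + xD))^⋆̃`. -/
theorem stableOp_primary_mul_add_eq
    (star : Submodule D K → Submodule D K) (hstar : IsSemistarOperation star)
    (hPMD : StarPMD star) (P Q : Ideal D) (hP : P.IsPrime) (hQ : Q ≠ ⊥)
    (hQprimary : Q.IsPrimary) (hrad : Q.radical = P) (x : D) (hx : x ∉ P) :
    stableOp star (idealExt K Q) =
      stableOp star (idealExt K (Q * (Q + Ideal.span {x}))) := by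
  refine le_antisymm ?_ ?_
  · refine iInf_mono fun M => iInf_mono fun hM => ?_
    have := aux_prime hstar hM
    refine Submodule.span_mono ?_
    rintro y ⟨s, hs, q, hq, hqy⟩
    obtain ⟨t, ht, htq⟩ := aux_key (hPMD M hM) hQprimary hrad x hx q hq
    refine ⟨t * s, fun h => (Ideal.IsPrime.mem_or_mem ‹M.IsPrime› h).elim ht hs, t * q, htq, ?_⟩
    change algebraMap D K q = _ at hqy
    change algebraMap D K (t * q) = _
    rw [map_mul, map_mul, hqy, mul_assoc]
  · refine iInf_mono fun M => iInf_mono fun hM => ?_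
    refine Submodule.span_mono ?_
    rintro y ⟨s, hs, q, hq, hqy⟩
    have hq' : q ∈ Q := (Ideal.mul_le_left : Q * (Q + Ideal.span {x}) ≤ Q) hq
    exact ⟨s, hs, q, hq', hqy⟩

end Statement
end

section
/- Let D be an integral domain and ⋆ a semistar operation on D. Then D is ⋆-Noetherian if and only if for each nonzero ideal I of D there exists a finitely generated ideal J of D with J ⊆ I and I^⋆ = J^⋆. Consequently, D is ⋆-Noetherian if and only if for each nonzero fractional ideal E of D there exists a nonzero finitely generated D-submodule F of K with F ⊆ E and F^⋆ = E^⋆. -/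
open scoped Pointwise

section Statement

variable {D : Type*} [CommRing D] [IsDomain D]
variable {K : Type*} [Field K] [Algebra D K] [IsFractionRing D K]

theorem idealExt_ne_bot' {I : Ideal D} (h : I ≠ ⊥) : idealExt K I ≠ ⊥ := by
  intro h0
  apply h
  unfold idealExt at h0
  rw [eq_bot_iff]
  intro x hx
  have h1 : Algebra.linearMap D K x ∈ (⊥ : Submodule D K) := h0 ▸ Submodule.mem_map_of_mem hx
  simpa using h1

theorem idealExt_mono' {I J : Ideal D} (h : I ≤ J) : idealExt K I ≤ idealExt K J :=
  Submodule.map_mono h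

/-- quasi-star closure -/
def qcl (star : Submodule D K → Submodule D K) (I : Ideal D) : Ideal D :=
  Submodule.comap (Algebra.linearMap D K) (star (idealExt K I))

theorem le_qcl {star : Submodule D K → Submodule D K} (hstar : IsSemistarOperation star)
    {I : Ideal D} (h : I ≠ ⊥) : I ≤ qcl star I :=
  Submodule.map_le_iff_le_comap.1 (hstar.le_star (idealExt_ne_bot' h))

theorem ne_bot_of_le' {I J : Ideal D} (h : I ≠ ⊥) (hh : I ≤ J) : J ≠ ⊥ := by
  rintro rfl
  exact h (le_bot_iff.1 hh)

theorem star_le_of_le_qcl {star : Submodule D K → Submodule D K}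
    (hstar : IsSemistarOperation star) {I J : Ideal D} (hI : I ≠ ⊥) (hJ : J ≠ ⊥)
    (h : I ≤ qcl star J) : star (idealExt K I) ≤ star (idealExt K J) := by
  have h1 : idealExt K I ≤ star (idealExt K J) := Submodule.map_le_iff_le_comap.2 h
  have h2 := hstar.mono (idealExt_ne_bot' hI) (hstar.ne_bot (idealExt_ne_bot' hJ)) h1
  rwa [hstar.star_star (idealExt_ne_bot' hJ)] at h2

theorem qcl_mono' {star : Submodule D K → Submodule D K} (hstar : IsSemistarOperation star)
    {I J : Ideal D} (hI : I ≠ ⊥) (h : I ≤ J) : qcl star I ≤ qcl star J :=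
  Submodule.comap_mono (hstar.mono (idealExt_ne_bot' hI)
    (idealExt_ne_bot' (ne_bot_of_le' hI h)) (idealExt_mono' h))

theorem qcl_quasi {star : Submodule D K → Submodule D K} (hstar : IsSemistarOperation star)
    {I : Ideal D} (hI : I ≠ ⊥) : QuasiStarIdeal star (qcl star I) := by
  have h0 := ne_bot_of_le' hI (le_qcl hstar hI)
  refine ⟨h0, le_antisymm ?_ (le_qcl hstar h0)⟩
  exact Submodule.comap_mono (star_le_of_le_qcl hstar h0 hI le_rfl)

theorem part_one (star : Submodule D K → Submodule D K) (hstar : IsSemistarOperation star) :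
    StarNoetherian star ↔
      ∀ I : Ideal D, I ≠ ⊥ →
        ∃ J : Ideal D, J ≠ ⊥ ∧ J.FG ∧ J ≤ I ∧
          star (idealExt K I) = star (idealExt K J) := by
  constructor
  · intro hN I hI
    have wf : WellFoundedGT {A : Ideal D // QuasiStarIdeal star A} := by
      rw [wellFoundedGT_iff_monotone_chain_condition]
      intro a
      obtain ⟨n, hn⟩ := hN ⟨fun n => (a n).1, fun i j hij => a.monotone hij⟩ (fun n => (a n).2)
      exact ⟨n, fun m hm => Subtype.ext (hn m hm).symm⟩
    let S : Set {A : Ideal D // QuasiStarIdeal star A} :=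
      {A | ∃ J : Ideal D, J ≠ ⊥ ∧ J.FG ∧ J ≤ I ∧ A.1 = qcl star J}
    have hS : S.Nonempty := by
      obtain ⟨x, hx, hx0⟩ := Submodule.exists_mem_ne_zero_of_ne_bot hI
      have hb : Ideal.span {x} ≠ ⊥ := by simpa using hx0
      exact ⟨⟨_, qcl_quasi hstar hb⟩, Ideal.span {x}, hb, ⟨{x}, by simp⟩, by
        rwa [Ideal.span_singleton_le_iff_mem], rfl⟩
    obtain ⟨A, ⟨J, hJ0, hJfg, hJI, hAJ⟩, hmax⟩ := wf.wf.has_min S hS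
    refine ⟨J, hJ0, hJfg, hJI, le_antisymm (star_le_of_le_qcl hstar hI hJ0 ?_)
      (hstar.mono (idealExt_ne_bot' hJ0) (idealExt_ne_bot' hI) (idealExt_mono' hJI))⟩
    intro x hx
    have hb : J ⊔ Ideal.span {x} ≠ ⊥ := ne_bot_of_le' hJ0 le_sup_left
    have hm := hmax ⟨_, qcl_quasi hstar hb⟩ ⟨J ⊔ Ideal.span {x}, hb,
      Submodule.FG.sup hJfg ⟨{x}, by simp⟩,
      sup_le hJI (by rwa [Ideal.span_singleton_le_iff_mem]), rfl⟩
    have hle : A.1 ≤ qcl star (J ⊔ Ideal.span {x}) := by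
      rw [hAJ]
      exact qcl_mono' hstar hJ0 le_sup_left
    have hxm : x ∈ qcl star (J ⊔ Ideal.span {x}) :=
      le_qcl hstar hb (Submodule.mem_sup_right (Ideal.mem_span_singleton_self x))
    by_contra hxn
    apply hm
    refine lt_of_le_of_ne hle ?_
    intro he
    apply hxn
    rw [← hAJ, he]
    exact hxm
  · intro h c hc
    have hle : ∀ n, c n ≤ ⨆ n, c n := fun n => le_iSup (fun n => c n) n
    obtain ⟨J, hJ0, hJfg, hJI, he⟩ := h (⨆ n, c n) (ne_bot_of_le' (hc 0).1 (hle 0))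
    obtain ⟨n, hn⟩ : ∃ n, J ≤ c n := by
      obtain ⟨T, rfl⟩ := hJfg
      have hT : ∀ x ∈ T, ∃ n, x ∈ c n := fun x hx =>
        (Submodule.mem_iSup_of_directed _ c.monotone.directed_le).1
          (hJI (Submodule.subset_span hx))
      choose! f hf using hT
      refine ⟨T.sup f, Submodule.span_le.2 fun x hx => ?_⟩
      exact c.monotone (Finset.le_sup hx) (hf x hx)
    refine ⟨n, fun m hm => le_antisymm ?_ (c.monotone hm)⟩
    rw [← (hc n).2]
    apply Submodule.map_le_iff_le_comap.1
    refine (idealExt_mono' (hle m)).trans ((hstar.le_star (idealExt_ne_bot' (ne_bot_of_le' (hc 0).1 (hle 0)))).trans ?_)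
    rw [he]
    exact hstar.mono (idealExt_ne_bot' hJ0) (idealExt_ne_bot' (hc n).1) (idealExt_mono' hn)

theorem map_inv_map (x : K) (hx : x ≠ 0) (E : Submodule D K) :
    Submodule.map (LinearMap.mulLeft D x⁻¹) (Submodule.map (LinearMap.mulLeft D x) E) = E := by
  rw [← Submodule.map_comp]
  have : LinearMap.mulLeft D x⁻¹ ∘ₗ LinearMap.mulLeft D x = LinearMap.id := by
    ext y
    simp [hx]
  rw [this, Submodule.map_id]

theorem map_mul_ne_bot (x : K) (hx : x ≠ 0) {E : Submodule D K} (hE : E ≠ ⊥) :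
    Submodule.map (LinearMap.mulLeft D x) E ≠ ⊥ := by
  intro h
  apply hE
  rw [← map_inv_map x hx E, h, Submodule.map_bot]

theorem idealExt_comap {E : Submodule D K} (h : ∀ x ∈ E, ∃ d : D, algebraMap D K d = x) :
    idealExt K (Submodule.comap (Algebra.linearMap D K) E) = E := by
  apply Submodule.map_comap_eq_of_le
  intro x hx
  obtain ⟨d, hd⟩ := h x hx
  exact ⟨d, hd⟩

theorem idealExt_bot' : idealExt K (⊥ : Ideal D) = ⊥ := Submodule.map_bot _

theorem part_two (star : Submodule D K → Submodule D K) (hstar : IsSemistarOperation star) :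
    (∀ I : Ideal D, I ≠ ⊥ →
        ∃ J : Ideal D, J ≠ ⊥ ∧ J.FG ∧ J ≤ I ∧
          star (idealExt K I) = star (idealExt K J)) ↔
      ∀ E : Submodule D K, E ≠ ⊥ → IsFractional (nonZeroDivisors D) E →
        ∃ F : Submodule D K, F ≠ ⊥ ∧ F.FG ∧ F ≤ E ∧ star F = star E := by
  constructor
  · rintro h E hE ⟨a, ha, hint⟩
    have ha0 : algebraMap D K a ≠ 0 := by
      simpa using nonZeroDivisors.ne_zero ha
    have hE' := map_mul_ne_bot _ ha0 hE
    have hI := idealExt_comap (E := Submodule.map (LinearMap.mulLeft D (algebraMap D K a)) E) (by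
      rintro _ ⟨y, hy, rfl⟩
      obtain ⟨d, hd⟩ := hint y hy
      exact ⟨d, by rw [hd, Algebra.smul_def]; rfl⟩)
    obtain ⟨J, hJ0, hJfg, hJI, he⟩ := h
      (Submodule.comap (Algebra.linearMap D K)
        (Submodule.map (LinearMap.mulLeft D (algebraMap D K a)) E)) (by
        intro h0
        rw [h0, idealExt_bot'] at hI
        exact hE' hI.symm)
    rw [hI] at he
    refine ⟨Submodule.map (LinearMap.mulLeft D (algebraMap D K a)⁻¹) (idealExt K J),
      map_mul_ne_bot _ (inv_ne_zero ha0) (idealExt_ne_bot' hJ0),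
      (Submodule.FG.map _ hJfg).map _, ?_, ?_⟩
    · conv_rhs => rw [← map_inv_map _ ha0 E]
      exact Submodule.map_mono ((idealExt_mono' hJI).trans hI.le)
    · rw [hstar.map_smul _ (inv_ne_zero ha0) (idealExt_ne_bot' hJ0), ← he,
        hstar.map_smul _ ha0 hE, map_inv_map _ ha0]
  · intro h I hI
    obtain ⟨F, hF0, hFfg, hFI, he⟩ := h (idealExt K I) (idealExt_ne_bot' hI) ⟨1, one_mem _, by
      rintro _ ⟨d, hd, rfl⟩
      exact ⟨d, by simp⟩⟩
    have hJ := idealExt_comap (E := F) (by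
      intro x hx
      obtain ⟨d, hd, rfl⟩ := hFI hx
      exact ⟨d, rfl⟩)
    have hinj : Function.Injective (Algebra.linearMap D K) := IsFractionRing.injective D K
    refine ⟨Submodule.comap (Algebra.linearMap D K) F, ?_, ?_, ?_, ?_⟩
    · intro h0
      rw [h0, idealExt_bot'] at hJ
      exact hF0 hJ.symm
    · apply Submodule.fg_of_fg_map_injective _ hinj
      change (idealExt K _).FG
      rwa [hJ]
    · refine (Submodule.comap_mono hFI).trans ?_
      exact (Submodule.comap_map_eq_of_injective hinj I).le
    · rw [hJ, he]

/-- `D` an integral domain, `⋆` a semistar operation. `D` is ⋆-Noetherian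
iff every nonzero ideal `I` of `D` admits a (nonzero) finitely generated ideal `J ⊆ I` with
`I^⋆ = J^⋆`; consequently, `D` is ⋆-Noetherian iff every nonzero fractional ideal `E` of `D`
admits a nonzero finitely generated `D`-submodule `F ⊆ E` of `K` with `F^⋆ = E^⋆`. -/
theorem starNoetherian_iff_ideals_star_finite
    (star : Submodule D K → Submodule D K) (hstar : IsSemistarOperation star) :
    (StarNoetherian star ↔
      ∀ I : Ideal D, I ≠ ⊥ →
        ∃ J : Ideal D, J ≠ ⊥ ∧ J.FG ∧ J ≤ I ∧
          star (idealExt K I) = star (idealExt K J)) ∧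
    (StarNoetherian star ↔
      ∀ E : Submodule D K, E ≠ ⊥ → IsFractional (nonZeroDivisors D) E →
        ∃ F : Submodule D K, F ≠ ⊥ ∧ F.FG ∧ F ≤ E ∧ star F = star E) := by
  exact ⟨part_one star hstar, (part_one star hstar).trans (part_two star hstar)⟩

end Statement
end
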